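/- arXiv:2203.00571 — 2 statements merged into one kernel-verified Lean document; each statement's English description precedes it below -/
import Mathlib

section
/- For every p ∈ [2,∞] there exists a constant C = C(p) > 0, independent of n, τ, ι and a, such that for all integers n ≥ 2, all τ > 0, all integers ι ≥ 1, and all a ∈ ℝ^{n-1}: ‖(I + τ A_n²)^{-ι} a‖_{l^p_n} ≤ C (τ ι)^{-(1/4)(1/2 - 1/p)} ‖a‖_{l²_n}, where 1/∞ := 0 and (I + τ A_n²)^{-ι} is the ι-th power of the inverse of the positive definite matrix I + τ A_n². -/
/-!
Write `‖·‖_p` for the discrete norms. Since `A` is symmetric, expanding the square gives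
`‖(1 + τA²)u‖₂² ≥ ‖u‖₂² + 2τ‖Au‖₂²`, and iterating (`A` commutes with `1 + τA²`)
`‖(1 + τA²)^k u‖₂² ≥ ‖u‖₂² + 2τk‖Au‖₂²`. With `a = (1 + τA²)^k u` this bounds `‖u‖₂` by `‖a‖₂`
and `‖Au‖₂` by `(τk)^(-1/2) ‖a‖₂`. The discrete Gagliardo–Nirenberg inequality
`‖u‖_∞⁴ ≤ ‖u‖₂³ ‖Au‖₂` then yields `‖u‖_∞ ≤ (τk)^(-1/8) ‖a‖₂`, and the exponents `2 < p < ∞`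
follow from `‖u‖_p ≤ ‖u‖_∞^(1 - 2/p) ‖u‖₂^(2/p)`. The constant obtained is `1`.
-/

noncomputable section

open Real Matrix Finset
open scoped ENNReal

/-- The matrix form `A_n` of the discrete Dirichlet Laplacian with mesh size `h = π/n`:
the `(n-1)×(n-1)` matrix `(n²/π²)·tridiag(1, -2, 1)`. -/
def disLap (n : ℕ) : Matrix (Fin (n - 1)) (Fin (n - 1)) ℝ :=
  Matrix.of fun i j =>
    ((n : ℝ) ^ 2 / Real.pi ^ 2) *
      (if (i : ℕ) = (j : ℕ) then -2
       else if (i : ℕ) + 1 = (j : ℕ) ∨ (j : ℕ) + 1 = (i : ℕ) then 1 else 0)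

/-- Discrete `l^p_n` norm `‖a‖ = ((π/n) Σ_{i=1}^{n-1} |a_i|^p)^{1/p}` for `1 ≤ p < ∞`. -/
def lpn (n : ℕ) (p : ℝ) (a : Fin (n - 1) → ℝ) : ℝ :=
  ((Real.pi / n) * ∑ i, |a i| ^ p) ^ (1 / p)

/-- Discrete `l²_n` norm. -/
def l2n (n : ℕ) (a : Fin (n - 1) → ℝ) : ℝ :=
  Real.sqrt ((Real.pi / n) * ∑ i, (a i) ^ 2)

/-- Discrete `l^∞_n` norm. -/
def linfn (n : ℕ) (a : Fin (n - 1) → ℝ) : ℝ := ⨆ i, |a i|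

/-- Discrete `l^p_n` norm for extended `p ∈ [1,∞]`. -/
def lpEn (n : ℕ) (p : ℝ≥0∞) (a : Fin (n - 1) → ℝ) : ℝ :=
  if p = ⊤ then linfn n a else lpn n p.toReal a

section ForwardDifferences

open fwdDiff

lemma sum_mul_fwdDiff_add_sum_fwdDiff_mul {R : Type*} [CommRing R] (f g : ℕ → R) (m : ℕ) :
    ∑ i ∈ range m, f (i + 1) * Δ_[1] g i + ∑ i ∈ range m, Δ_[1] f i * g i =
      f m * g m - f 0 * g 0 := by
  rw [← sum_add_distrib, ← sum_range_sub fun i => f i * g i]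
  refine sum_congr rfl fun i _ => ?_
  simp only [fwdDiff]
  ring

lemma abs_sub_add_abs_sub_le_sum_abs_fwdDiff {G : Type*} [AddCommGroup G] [LinearOrder G]
    [IsOrderedAddMonoid G] (f : ℕ → G) {k N : ℕ} (hk : k ≤ N) :
    |f k - f 0| + |f N - f k| ≤ ∑ j ∈ range N, |Δ_[1] f j| := by
  rw [← sum_range_sub, ← sum_Ico_sub f hk, ← sum_range_add_sum_Ico _ hk]
  exact add_le_add (abs_sum_le_sum_abs _ _) (abs_sum_le_sum_abs _ _)

variable {R : Type*} [CommRing R]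

lemma sum_fwdDiff_sq_eq_neg_sum_mul_fwdDiff_fwdDiff {U : ℕ → R} {m : ℕ} (h0 : U 0 = 0)
    (hm : U (m + 1) = 0) :
    ∑ j ∈ range (m + 1), Δ_[1] U j ^ 2 = -∑ i ∈ range m, U (i + 1) * Δ_[1] (Δ_[1] U) i := by
  have parts := sum_mul_fwdDiff_add_sum_fwdDiff_mul U (Δ_[1] U) m
  have boundary : Δ_[1] U m = -U m := by simp [fwdDiff, hm]
  simp only [← sq, h0, boundary] at parts
  rw [sum_range_succ, boundary]
  linear_combination parts

variable [LinearOrder R] [IsStrictOrderedRing R]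

lemma sq_sum_fwdDiff_sq_le {U : ℕ → R} {m : ℕ} (h0 : U 0 = 0) (hm : U (m + 1) = 0) :
    (∑ j ∈ range (m + 1), Δ_[1] U j ^ 2) ^ 2 ≤
      (∑ i ∈ range m, U (i + 1) ^ 2) * ∑ i ∈ range m, Δ_[1] (Δ_[1] U) i ^ 2 := by
  rw [sum_fwdDiff_sq_eq_neg_sum_mul_fwdDiff_fwdDiff h0 hm, neg_sq]
  exact sum_mul_sq_le_sq_mul_sq _ _ _

lemma sum_succ_add_sq_le {U : ℕ → R} {m : ℕ} (h0 : U 0 = 0) (hm : U (m + 1) = 0) :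
    ∑ j ∈ range (m + 1), (U (j + 1) + U j) ^ 2 ≤ 4 * ∑ i ∈ range m, U (i + 1) ^ 2 := by
  have shifted : ∑ j ∈ range (m + 1), U (j + 1) ^ 2 = ∑ i ∈ range m, U (i + 1) ^ 2 := by
    simp [sum_range_succ, hm]
  have unshifted : ∑ j ∈ range (m + 1), U j ^ 2 = ∑ i ∈ range m, U (i + 1) ^ 2 := by
    simp [sum_range_succ', h0]
  calc ∑ j ∈ range (m + 1), (U (j + 1) + U j) ^ 2
      ≤ ∑ j ∈ range (m + 1), 2 * (U (j + 1) ^ 2 + U j ^ 2) := sum_le_sum fun _ _ => add_sq_le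
    _ = 4 * ∑ i ∈ range m, U (i + 1) ^ 2 := by
      rw [← mul_sum, sum_add_distrib, shifted, unshifted]
      ring

lemma pow_four_le_sum_fwdDiff_sq_mul_sum_sq {U : ℕ → R} {m k : ℕ} (h0 : U 0 = 0)
    (hm : U (m + 1) = 0) (hk : k ≤ m + 1) :
    U k ^ 4 ≤ (∑ j ∈ range (m + 1), Δ_[1] U j ^ 2) * ∑ i ∈ range m, U (i + 1) ^ 2 := by
  have factor (j : ℕ) : |Δ_[1] (fun i => U i ^ 2) j| = |Δ_[1] U j| * |U (j + 1) + U j| := by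
    rw [← abs_mul]
    simp only [fwdDiff]
    congr 1
    ring
  -- Telescoping `U²` to both ends, rather than to one, is what makes the constant `1`.
  have telescope : 2 * U k ^ 2 ≤ ∑ j ∈ range (m + 1), |Δ_[1] U j| * |U (j + 1) + U j| := by
    have := abs_sub_add_abs_sub_le_sum_abs_fwdDiff (fun i => U i ^ 2) hk
    simpa [h0, hm, factor, two_mul] using this
  have cauchy_schwarz : (2 * U k ^ 2) ^ 2 ≤
      (∑ j ∈ range (m + 1), Δ_[1] U j ^ 2) * ∑ j ∈ range (m + 1), (U (j + 1) + U j) ^ 2 := by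
    refine (pow_le_pow_left₀ (by positivity) telescope 2).trans ?_
    simpa only [sq_abs] using sum_mul_sq_le_sq_mul_sq (range (m + 1))
      (fun j => |Δ_[1] U j|) (fun j => |U (j + 1) + U j|)
  have := cauchy_schwarz.trans <| mul_le_mul_of_nonneg_left (sum_succ_add_sq_le h0 hm) <|
    sum_nonneg fun j _ => sq_nonneg (Δ_[1] U j)
  linarith

lemma pow_eight_le_sum_sq_pow_three_mul_sum_fwdDiff_fwdDiff_sq {U : ℕ → R} {m k : ℕ}
    (h0 : U 0 = 0) (hm : U (m + 1) = 0) (hk : k ≤ m + 1) :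
    U k ^ 8 ≤ (∑ i ∈ range m, U (i + 1) ^ 2) ^ 3 * ∑ i ∈ range m, Δ_[1] (Δ_[1] U) i ^ 2 := by
  set S := ∑ i ∈ range m, U (i + 1) ^ 2
  set E := ∑ j ∈ range (m + 1), Δ_[1] U j ^ 2
  calc U k ^ 8 = (U k ^ 4) ^ 2 := by ring
    _ ≤ (E * S) ^ 2 := by
      gcongr
      exact pow_four_le_sum_fwdDiff_sq_mul_sum_sq h0 hm hk
    _ = S ^ 2 * E ^ 2 := by ring
    _ ≤ S ^ 2 * (S * ∑ i ∈ range m, Δ_[1] (Δ_[1] U) i ^ 2) := by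
      gcongr
      exact sq_sum_fwdDiff_sq_le h0 hm
    _ = S ^ 3 * ∑ i ∈ range m, Δ_[1] (Δ_[1] U) i ^ 2 := by ring

end ForwardDifferences

section ZeroExtension

variable {R : Type*} {m : ℕ}

/-- The extension by zero of a vector of interior values to the Dirichlet grid, which turns
`disLap` into a second forward difference: the value `u i` sits at the grid point `i + 1`, and
`0` and every point from `m + 1` on carry `0`. -/
def zeroExtend [Zero R] (u : Fin m → R) : ℕ → R :=
  Function.extend (fun i : Fin m => (i : ℕ) + 1) u 0

lemma zeroExtend_val_add_one [Zero R] (u : Fin m → R) (i : Fin m) : zeroExtend u (i + 1) = u i :=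
  ((add_left_injective 1).comp Fin.val_injective).extend_apply u 0 i

lemma zeroExtend_eq_zero [Zero R] (u : Fin m → R) {k : ℕ} (hk : ∀ i : Fin m, (i : ℕ) + 1 ≠ k) :
    zeroExtend u k = 0 :=
  Function.extend_apply' _ _ _ fun ⟨i, hi⟩ => hk i hi

lemma zeroExtend_zero [Zero R] (u : Fin m → R) : zeroExtend u 0 = 0 :=
  zeroExtend_eq_zero u fun i => by omega

lemma zeroExtend_add_one_eq_zero [Zero R] (u : Fin m → R) : zeroExtend u (m + 1) = 0 :=
  zeroExtend_eq_zero u fun i => by omega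

lemma sum_ite_val_add_one_eq [AddCommMonoid R] (u : Fin m → R) (k : ℕ) :
    ∑ j : Fin m, (if (j : ℕ) + 1 = k then u j else 0) = zeroExtend u k := by
  by_cases hk : ∃ i : Fin m, (i : ℕ) + 1 = k
  · obtain ⟨i, rfl⟩ := hk
    simp [zeroExtend_val_add_one, ← Fin.ext_iff]
  · push Not at hk
    simp [hk, zeroExtend_eq_zero u hk]

lemma sum_range_zeroExtend_sq [CommSemiring R] (u : Fin m → R) :
    ∑ i ∈ range m, zeroExtend u (i + 1) ^ 2 = u ⬝ᵥ u := by
  rw [← Fin.sum_univ_eq_sum_range fun i => zeroExtend u (i + 1) ^ 2]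
  simp only [zeroExtend_val_add_one, dotProduct, sq]

end ZeroExtension

section Resolvent

variable {ι R : Type*} [Fintype ι] [DecidableEq ι] [CommRing R] [LinearOrder R]
  [IsStrictOrderedRing R] {A : Matrix ι ι R} {τ : R}

lemma dotProduct_self_add_le_one_add_smul_mul_self_mulVec (hA : A.IsSymm) (u : ι → R) :
    u ⬝ᵥ u + 2 * τ * (A *ᵥ u ⬝ᵥ A *ᵥ u) ≤
      (1 + τ • (A * A)) *ᵥ u ⬝ᵥ (1 + τ • (A * A)) *ᵥ u := by
  have expand : (1 + τ • (A * A)) *ᵥ u = u + τ • (A *ᵥ A *ᵥ u) := by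
    rw [add_mulVec, one_mulVec, smul_mulVec, mulVec_mulVec]
  have cross : u ⬝ᵥ A *ᵥ A *ᵥ u = A *ᵥ u ⬝ᵥ A *ᵥ u := by
    rw [dotProduct_mulVec, ← mulVec_transpose, hA.eq]
  have square_nonneg : 0 ≤ τ ^ 2 * (A *ᵥ A *ᵥ u ⬝ᵥ A *ᵥ A *ᵥ u) :=
    mul_nonneg (sq_nonneg τ) (sum_nonneg fun _ _ => mul_self_nonneg _)
  rw [expand]
  simp only [add_dotProduct, dotProduct_add, smul_dotProduct, dotProduct_smul, smul_eq_mul,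
    dotProduct_comm (A *ᵥ A *ᵥ u) u, cross]
  linarith

lemma dotProduct_self_add_le_one_add_smul_mul_self_pow_mulVec (hA : A.IsSymm) (hτ : 0 ≤ τ)
    (k : ℕ) (u : ι → R) :
    u ⬝ᵥ u + 2 * (τ * k) * (A *ᵥ u ⬝ᵥ A *ᵥ u) ≤
      (1 + τ • (A * A)) ^ k *ᵥ u ⬝ᵥ (1 + τ • (A * A)) ^ k *ᵥ u := by
  induction k generalizing u with
  | zero => simp
  | succ k ih =>
    set M := 1 + τ • (A * A) with hM
    have commute : A *ᵥ M *ᵥ u = M *ᵥ A *ᵥ u := by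
      simp only [hM, mulVec_mulVec, mul_add, add_mul, mul_one, one_mul, Matrix.mul_smul,
        Matrix.smul_mul, mul_assoc]
    have expansive : A *ᵥ u ⬝ᵥ A *ᵥ u ≤ M *ᵥ A *ᵥ u ⬝ᵥ M *ᵥ A *ᵥ u :=
      (le_add_of_nonneg_right <| mul_nonneg (by positivity) <|
        sum_nonneg fun _ _ => mul_self_nonneg _).trans
        (dotProduct_self_add_le_one_add_smul_mul_self_mulVec hA _)
    calc u ⬝ᵥ u + 2 * (τ * (k + 1 : ℕ)) * (A *ᵥ u ⬝ᵥ A *ᵥ u)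
        = u ⬝ᵥ u + 2 * τ * (A *ᵥ u ⬝ᵥ A *ᵥ u) + 2 * (τ * k) * (A *ᵥ u ⬝ᵥ A *ᵥ u) := by
          push_cast
          ring
      _ ≤ M *ᵥ u ⬝ᵥ M *ᵥ u + 2 * (τ * k) * (A *ᵥ M *ᵥ u ⬝ᵥ A *ᵥ M *ᵥ u) := by
          rw [commute]
          gcongr
          exact dotProduct_self_add_le_one_add_smul_mul_self_mulVec hA u
      _ ≤ M ^ (k + 1) *ᵥ u ⬝ᵥ M ^ (k + 1) *ᵥ u := by
          simpa only [mulVec_mulVec, ← pow_succ] using ih (M *ᵥ u)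

lemma isUnit_one_add_smul_mul_self {A : Matrix ι ι ℝ} {τ : ℝ} (hA : A.IsSymm) (hτ : 0 ≤ τ) :
    IsUnit (1 + τ • (A * A)) := by
  have hAA : (A * A).PosSemidef := by
    simpa [conjTranspose_eq_transpose_of_trivial, hA.eq] using posSemidef_conjTranspose_mul_self A
  exact (PosDef.one.add_posSemidef (hAA.smul hτ)).isUnit

lemma one_add_smul_mul_self_pow_mulVec_inv_mulVec {A : Matrix ι ι ℝ} {τ : ℝ} (hA : A.IsSymm)
    (hτ : 0 ≤ τ) (k : ℕ) (a : ι → ℝ) :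
    (1 + τ • (A * A)) ^ k *ᵥ ((1 + τ • (A * A)) ^ k)⁻¹ *ᵥ a = a := by
  have hdet := (isUnit_iff_isUnit_det _).1 ((isUnit_one_add_smul_mul_self hA hτ).pow k)
  rw [mulVec_mulVec, mul_nonsing_inv _ hdet, one_mulVec]

end Resolvent

section Exponents

lemma mul_rpow_one_sub_mul_rpow {T L r s : ℝ} (hT : 0 ≤ T) (hL : 0 ≤ L) (hs : 0 ≤ s)
    (hs1 : 0 ≤ 1 - s) : (T ^ r * L) ^ (1 - s) * L ^ s = T ^ (r * (1 - s)) * L := by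
  rw [Real.mul_rpow (Real.rpow_nonneg hT r) hL, ← Real.rpow_mul hT, mul_assoc,
    ← Real.rpow_add_of_nonneg hL hs1 hs, sub_add_cancel, Real.rpow_one]

lemma two_mul_toReal_inv_le_one {p : ℝ≥0∞} (hp : 2 ≤ p) : 2 * (p⁻¹).toReal ≤ 1 := by
  have : (p⁻¹).toReal ≤ (2⁻¹ : ℝ≥0∞).toReal :=
    ENNReal.toReal_mono (by simp) (ENNReal.inv_le_inv.2 hp)
  rw [ENNReal.toReal_inv 2, ENNReal.toReal_ofNat] at this
  linarith

end Exponents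

section DiscreteNorms

variable {n : ℕ}

lemma l2n_nonneg (u : Fin (n - 1) → ℝ) : 0 ≤ l2n n u := Real.sqrt_nonneg _

lemma l2n_sq (u : Fin (n - 1) → ℝ) : l2n n u ^ 2 = π / n * (u ⬝ᵥ u) := by
  rw [l2n, Real.sq_sqrt (by positivity)]
  simp only [dotProduct, sq]

lemma linfn_nonneg (u : Fin (n - 1) → ℝ) : 0 ≤ linfn n u := Real.iSup_nonneg fun _ => abs_nonneg _

lemma abs_le_linfn (u : Fin (n - 1) → ℝ) (i : Fin (n - 1)) : |u i| ≤ linfn n u :=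
  le_ciSup (f := fun i => |u i|) (Set.finite_range _).bddAbove i

lemma lpn_le_linfn_rpow_mul_l2n_rpow {p : ℝ} (hp : 2 ≤ p) (u : Fin (n - 1) → ℝ) :
    lpn n p u ≤ linfn n u ^ (1 - 2 * p⁻¹) * l2n n u ^ (2 * p⁻¹) := by
  have : 0 < p := by linarith
  have hM := linfn_nonneg u
  have hL := l2n_nonneg u
  have termwise (i : Fin (n - 1)) : |u i| ^ p ≤ linfn n u ^ (p - 2) * (u i * u i) := by
    calc |u i| ^ p = |u i| ^ (p - 2) * |u i| ^ (2 : ℝ) := by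
          rw [← Real.rpow_add_of_nonneg (abs_nonneg _) (by linarith) zero_le_two, sub_add_cancel]
      _ = |u i| ^ (p - 2) * (u i * u i) := by rw [Real.rpow_two, sq_abs, sq]
      _ ≤ linfn n u ^ (p - 2) * (u i * u i) :=
          mul_le_mul_of_nonneg_right
            (Real.rpow_le_rpow (abs_nonneg _) (abs_le_linfn u i) (by linarith))
            (mul_self_nonneg _)
  have power_sum : π / n * ∑ i, |u i| ^ p ≤ linfn n u ^ (p - 2) * l2n n u ^ (2 : ℝ) := by
    calc π / n * ∑ i, |u i| ^ p ≤ π / n * ∑ i, linfn n u ^ (p - 2) * (u i * u i) := by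
          gcongr with i
          exact termwise i
      _ = linfn n u ^ (p - 2) * l2n n u ^ (2 : ℝ) := by
          rw [← mul_sum, Real.rpow_two, l2n_sq, dotProduct]
          ring
  calc lpn n p u ≤ (linfn n u ^ (p - 2) * l2n n u ^ (2 : ℝ)) ^ (1 / p) :=
        Real.rpow_le_rpow (by positivity) power_sum (by positivity)
    _ = linfn n u ^ (1 - 2 * p⁻¹) * l2n n u ^ (2 * p⁻¹) := by
        rw [Real.mul_rpow (by positivity) (by positivity), ← Real.rpow_mul hM, ← Real.rpow_mul hL]
        congr 2 <;> field_simp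

lemma lpEn_le_linfn_rpow_mul_l2n_rpow {p : ℝ≥0∞} (hp : 2 ≤ p) (u : Fin (n - 1) → ℝ) :
    lpEn n p u ≤ linfn n u ^ (1 - 2 * (p⁻¹).toReal) * l2n n u ^ (2 * (p⁻¹).toReal) := by
  rw [lpEn]
  split_ifs with hp_top
  · simp [hp_top]
  · rw [ENNReal.toReal_inv]
    exact lpn_le_linfn_rpow_mul_l2n_rpow (by simpa using ENNReal.toReal_mono hp_top hp) u

end DiscreteNorms

section DirichletLaplacian

open fwdDiff

variable {n : ℕ}

lemma disLap_isSymm (n : ℕ) : (disLap n).IsSymm := by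
  ext i j
  simp only [disLap, transpose_apply, of_apply, eq_comm (a := (j : ℕ)), or_comm]

lemma disLap_mulVec_apply (u : Fin (n - 1) → ℝ) (i : Fin (n - 1)) :
    (disLap n *ᵥ u) i = n ^ 2 / π ^ 2 * Δ_[1] (Δ_[1] (zeroExtend u)) i := by
  have split_entry (j : Fin (n - 1)) : disLap n i j * u j = n ^ 2 / π ^ 2 *
      ((if (j : ℕ) + 1 = i + 2 then u j else 0) - 2 * (if (j : ℕ) + 1 = i + 1 then u j else 0)
        + if (j : ℕ) + 1 = i then u j else 0) := by
    rw [disLap, of_apply, mul_assoc]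
    congr 1
    split_ifs <;> first | omega | ring
  rw [mulVec, dotProduct, sum_congr rfl fun j _ => split_entry j, ← mul_sum, sum_add_distrib,
    sum_sub_distrib, ← mul_sum]
  simp only [sum_ite_val_add_one_eq, fwdDiff]
  ring

lemma sum_range_fwdDiff_fwdDiff_zeroExtend_sq (u : Fin (n - 1) → ℝ) :
    ∑ i ∈ range (n - 1), Δ_[1] (Δ_[1] (zeroExtend u)) i ^ 2 =
      (π / n) ^ 4 * (disLap n *ᵥ u ⬝ᵥ disLap n *ᵥ u) := by
  rw [← Fin.sum_univ_eq_sum_range fun i => Δ_[1] (Δ_[1] (zeroExtend u)) i ^ 2, dotProduct, mul_sum]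
  refine sum_congr rfl fun i _ => ?_
  have hn : (n : ℝ) ≠ 0 := Nat.cast_ne_zero.2 (by have := i.2; omega)
  rw [disLap_mulVec_apply]
  field_simp

lemma linfn_pow_four_le (u : Fin (n - 1) → ℝ) :
    linfn n u ^ 4 ≤ l2n n u ^ 3 * l2n n (disLap n *ᵥ u) := by
  have hu := l2n_nonneg u
  have hAu := l2n_nonneg (disLap n *ᵥ u)
  rcases isEmpty_or_nonempty (Fin (n - 1)) with _ | _
  · rw [linfn, Real.iSup_of_isEmpty, zero_pow (by norm_num)]
    positivity
  obtain ⟨i, hi⟩ := exists_eq_ciSup_of_finite (f := fun i => |u i|)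
  refine le_of_sq_le_sq ?_ (by positivity)
  calc (linfn n u ^ 4) ^ 2 = zeroExtend u (i + 1) ^ 8 := by
        rw [linfn, ← hi, zeroExtend_val_add_one, ← pow_mul, Even.pow_abs (by decide)]
    _ ≤ (u ⬝ᵥ u) ^ 3 * ((π / n) ^ 4 * (disLap n *ᵥ u ⬝ᵥ disLap n *ᵥ u)) := by
        rw [← sum_range_zeroExtend_sq, ← sum_range_fwdDiff_fwdDiff_zeroExtend_sq]
        exact pow_eight_le_sum_sq_pow_three_mul_sum_fwdDiff_fwdDiff_sq (zeroExtend_zero u)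
          (zeroExtend_add_one_eq_zero u) (by omega)
    _ = (l2n n u ^ 2) ^ 3 * l2n n (disLap n *ᵥ u) ^ 2 := by
        rw [l2n_sq, l2n_sq]
        ring
    _ = (l2n n u ^ 3 * l2n n (disLap n *ᵥ u)) ^ 2 := by ring

variable {τ : ℝ}

lemma l2n_sq_add_le_one_add_smul_disLap_sq_pow_mulVec (hτ : 0 ≤ τ) (k : ℕ)
    (u : Fin (n - 1) → ℝ) :
    l2n n u ^ 2 + 2 * (τ * k) * l2n n (disLap n *ᵥ u) ^ 2 ≤
      l2n n ((1 + τ • (disLap n * disLap n)) ^ k *ᵥ u) ^ 2 := by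
  simp only [l2n_sq]
  calc π / n * (u ⬝ᵥ u) + 2 * (τ * k) * (π / n * (disLap n *ᵥ u ⬝ᵥ disLap n *ᵥ u))
      = π / n * (u ⬝ᵥ u + 2 * (τ * k) * (disLap n *ᵥ u ⬝ᵥ disLap n *ᵥ u)) := by ring
    _ ≤ _ := mul_le_mul_of_nonneg_left
        (dotProduct_self_add_le_one_add_smul_mul_self_pow_mulVec (disLap_isSymm n) hτ k u)
        (by positivity)

lemma l2n_le_one_add_smul_disLap_sq_pow_mulVec (hτ : 0 ≤ τ) (k : ℕ) (u : Fin (n - 1) → ℝ) :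
    l2n n u ≤ l2n n ((1 + τ • (disLap n * disLap n)) ^ k *ᵥ u) := by
  refine le_of_sq_le_sq ?_ (l2n_nonneg _)
  exact (le_add_of_nonneg_right (by positivity)).trans
    (l2n_sq_add_le_one_add_smul_disLap_sq_pow_mulVec hτ k u)

lemma linfn_le_one_add_smul_disLap_sq_pow_mulVec (hτ : 0 < τ) {k : ℕ} (hk : 0 < k)
    (u : Fin (n - 1) → ℝ) :
    linfn n u ≤
      (τ * k) ^ (-(1 / 8) : ℝ) * l2n n ((1 + τ • (disLap n * disLap n)) ^ k *ᵥ u) := by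
  set L := l2n n ((1 + τ • (disLap n * disLap n)) ^ k *ᵥ u)
  have hT : 0 < τ * k := by positivity
  have hL : 0 ≤ L := l2n_nonneg _
  have hu : 0 ≤ l2n n u := l2n_nonneg u
  have l2_bound : l2n n u ≤ L := l2n_le_one_add_smul_disLap_sq_pow_mulVec hτ.le k u
  have laplacian_bound : l2n n (disLap n *ᵥ u) ^ 2 ≤ (τ * k)⁻¹ * L ^ 2 := by
    rw [← div_eq_inv_mul, le_div_iff₀' hT]
    have energy := l2n_sq_add_le_one_add_smul_disLap_sq_pow_mulVec (n := n) hτ.le k u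
    have : 0 ≤ τ * k * l2n n (disLap n *ᵥ u) ^ 2 := by positivity
    linarith [sq_nonneg (l2n n u)]
  refine le_of_pow_le_pow_left₀ (n := 8) (by norm_num) (by positivity) ?_
  calc linfn n u ^ 8 = (linfn n u ^ 4) ^ 2 := by ring
    _ ≤ (l2n n u ^ 3 * l2n n (disLap n *ᵥ u)) ^ 2 :=
        pow_le_pow_left₀ (by positivity) (linfn_pow_four_le u) 2
    _ = l2n n u ^ 6 * l2n n (disLap n *ᵥ u) ^ 2 := by ring
    _ ≤ L ^ 6 * ((τ * k)⁻¹ * L ^ 2) := by gcongr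
    _ = (τ * k)⁻¹ * L ^ 8 := by ring
    _ = ((τ * k) ^ (-(1 / 8) : ℝ) * L) ^ 8 := by
        rw [mul_pow, ← Real.rpow_mul_natCast hT.le, ← Real.rpow_neg_one]
        norm_num

end DirichletLaplacian

/-- For every `p ∈ [2,∞]` there is `C = C(p) > 0`, independent of `n`, `τ`, `ι`, `a`, such
that for all `n ≥ 2`, `τ > 0`, integers `ι ≥ 1`, and `a ∈ ℝ^{n-1}`:
`‖(I + τA_n²)^{-ι} a‖_{l^p_n} ≤ C (τι)^{-(1/4)(1/2 - 1/p)} ‖a‖_{l²_n}` (with `1/∞ := 0`),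
where `(I + τA_n²)^{-ι}` is the `ι`-th power of the inverse of `I + τA_n²`. -/
theorem stmt11 (p : ℝ≥0∞) (hp : 2 ≤ p) :
    ∃ C : ℝ, 0 < C ∧ ∀ n : ℕ, 2 ≤ n → ∀ τ : ℝ, 0 < τ → ∀ ι : ℕ, 1 ≤ ι →
      ∀ a : Fin (n - 1) → ℝ,
        lpEn n p ((((1 : Matrix (Fin (n - 1)) (Fin (n - 1)) ℝ)
              + τ • (disLap n * disLap n)) ^ ι)⁻¹.mulVec a)
          ≤ C * (τ * (ι : ℝ)) ^ (-(1 / 4 : ℝ) * (1 / 2 - (p⁻¹).toReal)) * l2n n a := by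
  refine ⟨1, one_pos, fun n _ τ hτ ι hι a => ?_⟩
  set u := ((1 + τ • (disLap n * disLap n)) ^ ι)⁻¹ *ᵥ a
  set θ := (p⁻¹).toReal
  have hθ : 0 ≤ 1 - 2 * θ := sub_nonneg.2 (two_mul_toReal_inv_le_one hp)
  have hT : 0 < τ * ι := by positivity
  have hinf := linfn_nonneg u
  have h2 := l2n_nonneg u
  have ha := l2n_nonneg a
  have hu : (1 + τ • (disLap n * disLap n)) ^ ι *ᵥ u = a :=
    one_add_smul_mul_self_pow_mulVec_inv_mulVec (disLap_isSymm n) hτ.le ι a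
  have l2_bound := l2n_le_one_add_smul_disLap_sq_pow_mulVec hτ.le ι u
  have linf_bound := linfn_le_one_add_smul_disLap_sq_pow_mulVec hτ hι u
  rw [hu] at l2_bound linf_bound
  calc lpEn n p u ≤ linfn n u ^ (1 - 2 * θ) * l2n n u ^ (2 * θ) :=
        lpEn_le_linfn_rpow_mul_l2n_rpow hp u
    _ ≤ ((τ * ι) ^ (-(1 / 8) : ℝ) * l2n n a) ^ (1 - 2 * θ) * l2n n a ^ (2 * θ) := by
        gcongr
    _ = (τ * ι) ^ (-(1 / 8) * (1 - 2 * θ)) * l2n n a :=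
        mul_rpow_one_sub_mul_rpow hT.le ha (by positivity) hθ
    _ = 1 * (τ * ι) ^ (-(1 / 4) * (1 / 2 - θ)) * l2n n a := by
        rw [one_mul]
        congr 2
        ring
end
end

section
/- For every α ∈ (0,1) and every T > 0 there exists a constant C = C(α,T) > 0, independent of n, such that for all integers n ≥ 2, all x, y ∈ (0,π), and all 0 ≤ s < t ≤ T: ∫₀ˢ ∫₀^π |Δ_nG^n_{t-r}(x,z) - Δ_nG^n_{s-r}(y,z)| dz dr ≤ C (|x-y| + (t-s)^{3α/8}), and ∫ₛᵗ ∫₀^π |Δ_nG^n_{t-r}(x,z)| dz dr ≤ C (t-s)^{3α/8}. -/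
noncomputable section

open Real intervalIntegral

/-- The Dirichlet eigenfunctions `φ_j(x) = √(2/π) sin(jx)` on `(0,π)`. -/
def phiF (j : ℕ) (x : ℝ) : ℝ := Real.sqrt (2 / Real.pi) * Real.sin (j * x)

/-- The Green function of `∂_t + Δ²` with Dirichlet boundary conditions on `(0,π)`:
`G_t(x,y) = Σ_{j≥1} e^{-j⁴ t} φ_j(x) φ_j(y)`. -/
def GF (t x y : ℝ) : ℝ :=
  ∑' j : ℕ, Real.exp (-((j : ℝ) + 1) ^ 4 * t) * phiF (j + 1) x * phiF (j + 1) y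

/-- `ΔG_t(x,y) = -Σ_{j≥1} j² e^{-j⁴ t} φ_j(x) φ_j(y)`. -/
def DGF (t x y : ℝ) : ℝ :=
  -∑' j : ℕ, ((j : ℝ) + 1) ^ 2 * Real.exp (-((j : ℝ) + 1) ^ 4 * t) * phiF (j + 1) x * phiF (j + 1) y

/-- The grid projection `κ_n(y) = h⌊y/h⌋` with `h = π/n`. -/
def kap (n : ℕ) (y : ℝ) : ℝ := (Real.pi / n) * ⌊y / (Real.pi / n)⌋

/-- The eigenvalue `λ_{j,n} = -(4n²/π²) sin²(jπ/(2n))` of the discrete Dirichlet Laplacian. -/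
def lamEig (j n : ℕ) : ℝ :=
  -(4 * (n : ℝ) ^ 2 / Real.pi ^ 2) * Real.sin ((j : ℝ) * Real.pi / (2 * n)) ^ 2

/-- The piecewise-linear interpolant `φ_{j,n}` of `φ_j` on the grid `{0, h, …, π}`. -/
def phiIn (n j : ℕ) (x : ℝ) : ℝ :=
  phiF j (kap n x)
    + ((n : ℝ) / Real.pi) * (x - kap n x) * (phiF j (kap n x + Real.pi / n) - phiF j (kap n x))

/-- The spatially discrete Green function
`G^n_t(x,y) = Σ_{j=1}^{n-1} e^{-λ_{j,n}² t} φ_{j,n}(x) φ_j(κ_n(y))`. -/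
def Gn (n : ℕ) (t x y : ℝ) : ℝ :=
  ∑ j ∈ Finset.range (n - 1),
    Real.exp (-(lamEig (j + 1) n) ^ 2 * t) * phiIn n (j + 1) x * phiF (j + 1) (kap n y)

/-- `Δ_nG^n_t(x,y) = Σ_{j=1}^{n-1} λ_{j,n} e^{-λ_{j,n}² t} φ_{j,n}(x) φ_j(κ_n(y))`. -/
def DGn (n : ℕ) (t x y : ℝ) : ℝ :=
  ∑ j ∈ Finset.range (n - 1),
    lamEig (j + 1) n * Real.exp (-(lamEig (j + 1) n) ^ 2 * t)
      * phiIn n (j + 1) x * phiF (j + 1) (kap n y)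

/-- The fully discrete Green function
`G^{n,τ}_t(x,y) = Σ_{j=1}^{n-1} (1 + τλ_{j,n}²)^{-⌊t/τ⌋} φ_{j,n}(x) φ_j(κ_n(y))`. -/
def Gnt (n : ℕ) (τ t x y : ℝ) : ℝ :=
  ∑ j ∈ Finset.range (n - 1),
    ((1 + τ * (lamEig (j + 1) n) ^ 2) ^ (⌊t / τ⌋₊))⁻¹ * phiIn n (j + 1) x * phiF (j + 1) (kap n y)

/-- `Δ_nG^{n,τ}_t(x,y) = Σ_{j=1}^{n-1} λ_{j,n} (1 + τλ_{j,n}²)^{-⌊t/τ⌋} φ_{j,n}(x) φ_j(κ_n(y))`. -/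
def DGnt (n : ℕ) (τ t x y : ℝ) : ℝ :=
  ∑ j ∈ Finset.range (n - 1),
    lamEig (j + 1) n * ((1 + τ * (lamEig (j + 1) n) ^ 2) ^ (⌊t / τ⌋₊))⁻¹
      * phiIn n (j + 1) x * phiF (j + 1) (kap n y)

/-!
For fixed `x`, the kernel `Δ_nG^n_τ(x, ·)` is a sine polynomial composed with the step function
`κ_n`. Discrete orthogonality of the `φ_j` together with Cauchy–Schwarz bounds its `L¹` norm by the
`ℓ²` norm of its coefficients. Since `|λ_{j,n}| ≥ j² / 4`, coefficients of size `|λ_{j,n}|^{-e}`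
with `e > 1/4` have `ℓ²` norm bounded uniformly in `n`. The smoothing bound
`|λ| e^{-λ² τ} ≤ |λ|^{1 - 2 q} τ^{-q}` then trades powers of `λ` for a singularity in time that is
integrable as long as `q < 1`: the size of the kernel needs `q > 5/8`, a Lipschitz bound in `x`
costs `|λ|^{1/2}` and needs `q > 7/8`, and a factor `δ^β` in time costs `|λ|^{2β}` and needs
`q > 5/8 + β`, which leaves room below `1` exactly when `β < 3/8`.
-/

section Interpolation

/-- The piecewise-linear interpolant of `f` on the grid `h ℤ`, of which `phiIn n j` is the instance
`h = π / n`, `f = φ_j`. -/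
def linInterp (h : ℝ) (f : ℝ → ℝ) (x : ℝ) : ℝ :=
  f (h * ⌊x / h⌋) + Int.fract (x / h) * (f (h * ⌊x / h⌋ + h) - f (h * ⌊x / h⌋))

lemma abs_linInterp_le {f : ℝ → ℝ} {M : ℝ} (hf : ∀ x, |f x| ≤ M) (h x : ℝ) :
    |linInterp h f x| ≤ M := by
  have hmem (z : ℝ) : f z ∈ Set.Icc (-M) M := abs_le.mp (hf z)
  exact abs_le.mpr <| (convex_Icc (-M) M).add_smul_sub_mem (hmem _) (hmem _)
    ⟨Int.fract_nonneg (x / h), (Int.fract_lt_one (x / h)).le⟩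

lemma monotone_linInterp {f : ℝ → ℝ} (hf : Monotone f) {h : ℝ} (hh : 0 ≤ h) :
    Monotone (linInterp h f) := by
  intro x y hxy
  have hxy' : x / h ≤ y / h := div_le_div_of_nonneg_right hxy hh
  have hcell (k : ℤ) : 0 ≤ f (h * k + h) - f (h * k) :=
    sub_nonneg.mpr (hf (le_add_of_nonneg_right hh))
  simp only [linInterp]
  rcases (Int.floor_mono hxy').eq_or_lt with hsame | hnext
  · have hfract : Int.fract (x / h) ≤ Int.fract (y / h) := by
      simp only [Int.fract, hsame]
      gcongr
    rw [hsame]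
    gcongr
    exact hcell _
  · have hnode : h * ⌊x / h⌋ + h ≤ h * ⌊y / h⌋ := by
      have : (⌊x / h⌋ : ℝ) + 1 ≤ ⌊y / h⌋ := by exact_mod_cast hnext
      linarith [mul_le_mul_of_nonneg_left this hh]
    calc f (h * ⌊x / h⌋) + Int.fract (x / h) * (f (h * ⌊x / h⌋ + h) - f (h * ⌊x / h⌋))
        ≤ f (h * ⌊x / h⌋ + h) := by
          linarith [mul_le_of_le_one_left (hcell ⌊x / h⌋) (Int.fract_lt_one (x / h)).le]
      _ ≤ f (h * ⌊y / h⌋) := hf hnode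
      _ ≤ _ := le_add_of_nonneg_right (mul_nonneg (Int.fract_nonneg _) (hcell _))

lemma linInterp_mul_add_mul {h : ℝ} (hh : h ≠ 0) (c d : ℝ) (f : ℝ → ℝ) (x : ℝ) :
    linInterp h (fun z ↦ c * z + d * f z) x = c * x + d * linInterp h f x := by
  have hx : h * (⌊x / h⌋ + Int.fract (x / h)) = x := by
    rw [Int.floor_add_fract, mul_div_cancel₀ _ hh]
  simp only [linInterp]
  linear_combination c * hx

-- Interpolation is monotone and reproduces linear functions, so it maps the increasing functions
-- `K z ± f z` to the functions `K z ± linInterp h f z`, which are therefore increasing as well.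
lemma lipschitzWith_linInterp {f : ℝ → ℝ} {K : NNReal} (hf : LipschitzWith K f) {h : ℝ}
    (hh : 0 < h) : LipschitzWith K (linInterp h f) := by
  have hmono {σ : ℝ} (hσ : |σ| = 1) :
      Monotone fun z ↦ (K : ℝ) * z + σ * linInterp h f z := by
    have hadd : Monotone fun z ↦ (K : ℝ) * z + σ * f z := by
      intro x y hxy
      have hσf : σ * (f x - f y) ≤ K * (y - x) := by
        calc σ * (f x - f y) ≤ |σ * (f x - f y)| := le_abs_self _
          _ = dist (f x) (f y) := by rw [abs_mul, hσ, one_mul, Real.dist_eq]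
          _ ≤ K * dist x y := hf.dist_le_mul x y
          _ = K * (y - x) := by rw [dist_comm, Real.dist_eq, abs_of_nonneg (sub_nonneg.mpr hxy)]
      linarith
    simpa only [← linInterp_mul_add_mul hh.ne'] using monotone_linInterp hadd hh.le
  refine LipschitzWith.of_le_add_mul K fun x y ↦ ?_
  rw [Real.dist_eq]
  rcases le_total x y with hxy | hyx
  · have := hmono (σ := 1) (by simp) hxy
    rw [abs_sub_comm, abs_of_nonneg (sub_nonneg.mpr hxy)]
    linarith
  · have := hmono (σ := -1) (by simp) hyx
    rw [abs_of_nonneg (sub_nonneg.mpr hyx)]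
    linarith

end Interpolation

section Eigenfunctions

lemma sqrt_two_div_pi_le_one : √(2 / π) ≤ 1 :=
  Real.sqrt_le_one.mpr ((div_le_one Real.pi_pos).mpr Real.two_le_pi)

lemma abs_phiF_le_one (j : ℕ) (x : ℝ) : |phiF j x| ≤ 1 := by
  rw [phiF, abs_mul, abs_of_nonneg (Real.sqrt_nonneg _)]
  exact mul_le_one₀ sqrt_two_div_pi_le_one (abs_nonneg _) (Real.abs_sin_le_one _)

lemma lipschitzWith_phiF (j : ℕ) : LipschitzWith j (phiF j) := by
  refine LipschitzWith.of_dist_le_mul fun x y ↦ ?_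
  have hsin : |sin (j * x) - sin (j * y)| ≤ |j * x - j * y| := by
    simpa only [Real.dist_eq, NNReal.coe_one, one_mul] using
      Real.lipschitzWith_sin.dist_le_mul (j * x) (j * y)
  calc dist (phiF j x) (phiF j y)
      = √(2 / π) * |sin (j * x) - sin (j * y)| := by
        rw [Real.dist_eq, phiF, phiF, ← mul_sub, abs_mul, abs_of_nonneg (Real.sqrt_nonneg _)]
    _ ≤ 1 * |j * x - j * y| :=
        mul_le_mul sqrt_two_div_pi_le_one hsin (abs_nonneg _) zero_le_one
    _ = (j : NNReal) * dist x y := by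
        rw [one_mul, ← mul_sub, abs_mul, Nat.abs_cast, Real.dist_eq, NNReal.coe_natCast]

lemma phiIn_eq_linInterp {n : ℕ} (hn : n ≠ 0) (j : ℕ) (x : ℝ) :
    phiIn n j x = linInterp (π / n) (phiF j) x := by
  have hfract : (n : ℝ) / π * (x - kap n x) = Int.fract (x / (π / n)) := by
    rw [kap, Int.fract]
    field_simp
  rw [phiIn, hfract, kap, linInterp]

lemma abs_phiIn_le_one {n : ℕ} (hn : n ≠ 0) (j : ℕ) (x : ℝ) : |phiIn n j x| ≤ 1 := by
  rw [phiIn_eq_linInterp hn]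
  exact abs_linInterp_le (abs_phiF_le_one j) _ _

lemma abs_phiIn_sub_le {n : ℕ} (hn : n ≠ 0) (j : ℕ) (x y : ℝ) :
    |phiIn n j x - phiIn n j y| ≤ j * |x - y| := by
  have hh : 0 < π / n := by positivity
  rw [phiIn_eq_linInterp hn, phiIn_eq_linInterp hn]
  simpa only [Real.dist_eq, NNReal.coe_natCast] using
    (lipschitzWith_linInterp (lipschitzWith_phiF j) hh).dist_le_mul x y

lemma sq_half_le_abs_lamEig {n j : ℕ} (hj : j ≤ n) : ((j : ℝ) / 2) ^ 2 ≤ |lamEig j n| := by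
  rcases n.eq_zero_or_pos with rfl | hn
  · simp [Nat.le_zero.mp hj]
  have hjn : (j : ℝ) ≤ n := by exact_mod_cast hj
  have hsin : (j : ℝ) / n ≤ sin (j * π / (2 * n)) := by
    calc (j : ℝ) / n = 2 / π * (j * π / (2 * n)) := by field_simp
      _ ≤ sin (j * π / (2 * n)) := Real.mul_le_sin (by positivity) <| by
          rw [div_le_div_iff₀ (by positivity) two_pos]
          nlinarith [Real.pi_pos]
  calc ((j : ℝ) / 2) ^ 2 = 4 * n ^ 2 / 4 ^ 2 * (j / n) ^ 2 := by
        field_simp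
        norm_num
    _ ≤ 4 * n ^ 2 / π ^ 2 * sin (j * π / (2 * n)) ^ 2 := by
        gcongr
        exact Real.pi_le_four
    _ = |lamEig j n| := by
        rw [lamEig, neg_mul, abs_neg, abs_of_nonneg (by positivity)]

lemma half_le_abs_lamEig_rpow {n j : ℕ} (hj : j ≤ n) :
    (j : ℝ) / 2 ≤ |lamEig j n| ^ (1 / 2 : ℝ) := by
  rw [← Real.sqrt_eq_rpow]
  exact Real.le_sqrt_of_sq_le (sq_half_le_abs_lamEig hj)

end Eigenfunctions

section Orthogonality

lemma sum_cos_mul_eq {n : ℕ} {u : ℝ} (hu : sin (u / 2) ≠ 0) (hnu : sin (n * u) = 0) :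
    ∑ l ∈ Finset.range n, cos (u * l) = (1 - cos (n * u)) / 2 := by
  obtain ⟨v, rfl⟩ : ∃ v, u = 2 * v := ⟨u / 2, by ring⟩
  rw [mul_div_cancel_left₀ v two_ne_zero] at hu
  rw [mul_left_comm, Real.sin_two_mul] at hnu
  have hdirichlet : sin v * ∑ l ∈ Finset.range n, cos (2 * v * l)
      = sin (n * v) * cos (n * v - v) := by
    convert Real.sin_mul_sum_cos n (2 * v) 0 using 3 <;> ring_nf
  apply mul_left_cancel₀ hu
  rw [hdirichlet, mul_left_comm (n : ℝ), Real.cos_two_mul', Real.cos_sq', Real.cos_sub]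
  linear_combination cos v / 2 * hnu

lemma sum_cos_int_node {n : ℕ} (hn : n ≠ 0) {m : ℤ} (hm : ¬ (2 * n : ℤ) ∣ m) :
    ∑ l ∈ Finset.range n, cos (m * π / n * l) = (1 - cos (m * π)) / 2 := by
  have hfreq : n * (m * π / n) = m * π := by field_simp
  have hhalf : sin (m * π / n / 2) ≠ 0 := by
    rw [Real.sin_ne_zero_iff]
    intro k hk
    refine hm ⟨k, ?_⟩
    have : (m : ℝ) = 2 * n * k := by
      field_simp at hk
      linarith
    exact_mod_cast this
  rw [sum_cos_mul_eq hhalf (by rw [hfreq, Real.sin_int_mul_pi]), hfreq]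

lemma sum_sin_mul_sin_node {n j k : ℕ} (hj : 0 < j) (hjn : j < n) (hkn : k < n) :
    ∑ l ∈ Finset.range n, sin (j * (π / n * l)) * sin (k * (π / n * l))
      = if j = k then (n : ℝ) / 2 else 0 := by
  have hprod : ∑ l ∈ Finset.range n, sin (j * (π / n * l)) * sin (k * (π / n * l))
      = (∑ l ∈ Finset.range n, cos ((j - k : ℤ) * π / n * l)
          - ∑ l ∈ Finset.range n, cos ((j + k : ℤ) * π / n * l)) / 2 := by
    rw [← Finset.sum_sub_distrib, Finset.sum_div]
    refine Finset.sum_congr rfl fun l _ ↦ ?_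
    rw [eq_div_iff two_ne_zero, mul_comm, ← mul_assoc, Real.two_mul_sin_mul_sin]
    push_cast
    ring_nf
  have hnot_dvd {m : ℤ} (hm : m ≠ 0) (hmn : |m| < 2 * n) : ¬ (2 * n : ℤ) ∣ m :=
    fun hdvd ↦ hm (Int.eq_zero_of_abs_lt_dvd hdvd hmn)
  have hplus : ∑ l ∈ Finset.range n, cos ((j + k : ℤ) * π / n * l)
      = (1 - cos (j * π) * cos (k * π)) / 2 := by
    rw [sum_cos_int_node (by omega) (hnot_dvd (by omega) (by rw [abs_lt]; omega))]
    push_cast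
    rw [add_mul, Real.cos_add, Real.sin_nat_mul_pi, zero_mul, sub_zero]
  rw [hprod, hplus]
  split_ifs with hjk
  · have hsq : cos (k * π) ^ 2 = 1 := by rw [Real.cos_sq', Real.sin_nat_mul_pi]; ring
    simp only [hjk, sub_self, Int.cast_zero, zero_mul, zero_div, Real.cos_zero, Finset.sum_const,
      Finset.card_range, nsmul_eq_mul]
    linear_combination hsq / 4
  · have hminus : ∑ l ∈ Finset.range n, cos ((j - k : ℤ) * π / n * l)
        = (1 - cos (j * π) * cos (k * π)) / 2 := by
      rw [sum_cos_int_node (by omega) (hnot_dvd (by omega) (by rw [abs_lt]; omega))]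
      push_cast
      rw [sub_mul, Real.cos_sub, Real.sin_nat_mul_pi, zero_mul, add_zero]
    rw [hminus, sub_self, zero_div]

lemma sum_phiF_mul_phiF_node {n j k : ℕ} (hj : 0 < j) (hjn : j < n) (hkn : k < n) :
    ∑ l ∈ Finset.range n, phiF j (π / n * l) * phiF k (π / n * l)
      = if j = k then n / π else 0 := by
  have hsqrt : √(2 / π) * √(2 / π) = 2 / π := Real.mul_self_sqrt (by positivity)
  simp only [phiF, mul_mul_mul_comm _ (sin _), hsqrt]
  rw [← Finset.mul_sum, sum_sin_mul_sin_node hj hjn hkn, mul_ite, mul_zero]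
  congr 1
  field_simp

/-- The sine polynomial `∑_{j=1}^{n-1} a_j φ_j`. As in `DGn` the coefficients are indexed from `0`,
so that `a j` multiplies `φ_{j+1}`. -/
def sinePoly (n : ℕ) (a : ℕ → ℝ) (w : ℝ) : ℝ :=
  ∑ j ∈ Finset.range (n - 1), a j * phiF (j + 1) w

lemma sinePoly_sub (n : ℕ) (a b : ℕ → ℝ) (w : ℝ) :
    sinePoly n (a - b) w = sinePoly n a w - sinePoly n b w := by
  simp only [sinePoly, Pi.sub_apply, sub_mul, Finset.sum_sub_distrib]

lemma sum_sq_sinePoly_node (n : ℕ) (a : ℕ → ℝ) :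
    ∑ l ∈ Finset.range n, sinePoly n a (π / n * l) ^ 2
      = n / π * ∑ j ∈ Finset.range (n - 1), a j ^ 2 := by
  have horth {j k : ℕ} (hj : j ∈ Finset.range (n - 1)) (hk : k ∈ Finset.range (n - 1)) :
      ∑ l ∈ Finset.range n, phiF (j + 1) (π / n * l) * phiF (k + 1) (π / n * l)
        = if j = k then n / π else 0 := by
    rw [Finset.mem_range] at hj hk
    rw [sum_phiF_mul_phiF_node (by omega) (by omega) (by omega)]
    simp only [Nat.add_right_cancel_iff]
  calc ∑ l ∈ Finset.range n, sinePoly n a (π / n * l) ^ 2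
      = ∑ j ∈ Finset.range (n - 1), ∑ k ∈ Finset.range (n - 1), a j * a k *
          ∑ l ∈ Finset.range n, phiF (j + 1) (π / n * l) * phiF (k + 1) (π / n * l) := by
        simp only [sinePoly, sq, Finset.sum_mul_sum]
        simp only [Finset.mul_sum, mul_mul_mul_comm _ (phiF _ _)]
        rw [Finset.sum_comm]
        exact Finset.sum_congr rfl fun j _ ↦ Finset.sum_comm
    _ = ∑ j ∈ Finset.range (n - 1), ∑ k ∈ Finset.range (n - 1),
          a j * a k * if j = k then n / π else 0 :=
        Finset.sum_congr rfl fun j hj ↦ Finset.sum_congr rfl fun k hk ↦ by rw [horth hj hk]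
    _ = ∑ j ∈ Finset.range (n - 1), a j * a j * (n / π) := by
        refine Finset.sum_congr rfl fun j hj ↦ ?_
        simp only [mul_ite, mul_zero, Finset.sum_ite_eq, hj, if_true]
    _ = n / π * ∑ j ∈ Finset.range (n - 1), a j ^ 2 := by
        rw [Finset.mul_sum]
        exact Finset.sum_congr rfl fun j _ ↦ by ring

end Orthogonality

section StepFunctions

variable {E : Type*} [NormedAddCommGroup E]

lemma kap_eq_of_mem_Ico {n : ℕ} (hn : n ≠ 0) {l : ℤ} {z : ℝ}
    (hz : z ∈ Set.Ico (π / n * l) (π / n * (l + 1))) : kap n z = π / n * l := by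
  have hh : 0 < π / n := by positivity
  have hfloor : ⌊z / (π / n)⌋ = l := by
    rw [Int.floor_eq_iff, le_div_iff₀' hh, div_lt_iff₀' hh]
    exact hz
  rw [kap, hfloor]

lemma eqOn_comp_kap_cell {α : Type*} {n : ℕ} (hn : n ≠ 0) (g : ℝ → α) (l : ℕ) :
    Set.EqOn (fun _ ↦ g (π / n * l)) (fun z ↦ g (kap n z))
      (Set.uIoo (π / n * l) (π / n * (l + 1 : ℕ))) := by
  intro z hz
  rw [Set.uIoo_of_le (by gcongr; omega)] at hz
  have := kap_eq_of_mem_Ico (l := l) hn ⟨mod_cast hz.1.le, mod_cast hz.2⟩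
  rw [Int.cast_natCast] at this
  simp only [this]

lemma intervalIntegrable_comp_kap_cell {n : ℕ} (hn : n ≠ 0) (g : ℝ → E) (l : ℕ) :
    IntervalIntegrable (fun z ↦ g (kap n z)) MeasureTheory.volume
      (π / n * l) (π / n * (l + 1 : ℕ)) :=
  intervalIntegrable_const.congr_uIoo (eqOn_comp_kap_cell hn g l)

lemma intervalIntegrable_comp_kap {n : ℕ} (hn : n ≠ 0) (g : ℝ → E) :
    IntervalIntegrable (fun z ↦ g (kap n z)) MeasureTheory.volume 0 π := by
  have h := IntervalIntegrable.trans_iterate (a := fun l : ℕ ↦ π / n * l) (n := n)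
    fun l _ ↦ intervalIntegrable_comp_kap_cell hn g l
  rwa [Nat.cast_zero, mul_zero, div_mul_cancel₀ _ (by exact_mod_cast hn)] at h

lemma integral_comp_kap [NormedSpace ℝ E] [CompleteSpace E] {n : ℕ} (hn : n ≠ 0) (g : ℝ → E) :
    ∫ z in (0 : ℝ)..π, g (kap n z) = (π / n) • ∑ l ∈ Finset.range n, g (π / n * l) := by
  have hcell (l : ℕ) : ∫ z in π / n * l..π / n * (l + 1 : ℕ), g (kap n z)
      = (π / n) • g (π / n * l) := by
    rw [← integral_congr_uIoo (eqOn_comp_kap_cell hn g l), integral_const, Nat.cast_succ,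
      ← mul_sub, add_sub_cancel_left, mul_one]
  have h := sum_integral_adjacent_intervals (a := fun l : ℕ ↦ π / n * l) (n := n)
    fun l _ ↦ intervalIntegrable_comp_kap_cell hn g l
  rw [Nat.cast_zero, mul_zero, div_mul_cancel₀ _ (by exact_mod_cast hn)] at h
  rw [← h, Finset.smul_sum]
  exact Finset.sum_congr rfl fun l _ ↦ hcell l

lemma integral_sq_sinePoly_kap {n : ℕ} (hn : n ≠ 0) (a : ℕ → ℝ) :
    ∫ z in (0 : ℝ)..π, sinePoly n a (kap n z) ^ 2 = ∑ j ∈ Finset.range (n - 1), a j ^ 2 := by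
  rw [integral_comp_kap hn fun w ↦ sinePoly n a w ^ 2, sum_sq_sinePoly_node, smul_eq_mul]
  field_simp

lemma sq_integral_abs_comp_kap_le {n : ℕ} (hn : n ≠ 0) (g : ℝ → ℝ) :
    (∫ z in (0 : ℝ)..π, |g (kap n z)|) ^ 2 ≤ π * ∫ z in (0 : ℝ)..π, g (kap n z) ^ 2 := by
  rw [integral_comp_kap hn fun w ↦ |g w|, integral_comp_kap hn fun w ↦ g w ^ 2, smul_eq_mul,
    smul_eq_mul, mul_pow]
  have hcs : (∑ l ∈ Finset.range n, |g (π / n * l)|) ^ 2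
      ≤ n * ∑ l ∈ Finset.range n, g (π / n * l) ^ 2 := by
    simpa only [sq_abs, Finset.card_range] using
      sq_sum_le_card_mul_sum_sq (s := Finset.range n) (f := fun l ↦ |g (π / n * l)|)
  calc (π / n) ^ 2 * (∑ l ∈ Finset.range n, |g (π / n * l)|) ^ 2
      ≤ (π / n) ^ 2 * (n * ∑ l ∈ Finset.range n, g (π / n * l) ^ 2) := by gcongr
    _ = π * (π / n * ∑ l ∈ Finset.range n, g (π / n * l) ^ 2) := by field_simp

lemma integral_abs_sinePoly_kap_le {n : ℕ} (hn : n ≠ 0) (a : ℕ → ℝ) :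
    ∫ z in (0 : ℝ)..π, |sinePoly n a (kap n z)| ≤ √(π * ∑ j ∈ Finset.range (n - 1), a j ^ 2) := by
  rw [← integral_sq_sinePoly_kap hn]
  exact Real.le_sqrt_of_sq_le (sq_integral_abs_comp_kap_le hn _)

end StepFunctions

section Semigroup

lemma exp_neg_le_rpow_neg {u q : ℝ} (hu : 0 < u) (hq₀ : 0 ≤ q) (hq₁ : q ≤ 1) :
    exp (-u) ≤ u ^ (-q) := by
  have hexp : u ^ q ≤ exp u :=
    calc u ^ q ≤ (u + 1) ^ q := by gcongr; exact le_add_of_nonneg_right zero_le_one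
      _ ≤ (u + 1) ^ (1 : ℝ) := Real.rpow_le_rpow_of_exponent_le (by linarith) hq₁
      _ ≤ exp u := by simpa only [Real.rpow_one] using Real.add_one_le_exp u
  rw [Real.exp_neg, Real.rpow_neg hu.le]
  exact inv_anti₀ (by positivity) hexp

lemma one_sub_exp_neg_le_rpow {v b : ℝ} (hv : 0 ≤ v) (hb₀ : 0 ≤ b) (hb₁ : b ≤ 1) :
    1 - exp (-v) ≤ v ^ b := by
  rcases le_total v 1 with hv₁ | hv₁
  · calc 1 - exp (-v) ≤ v := by linarith [Real.add_one_le_exp (-v)]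
      _ = v ^ (1 : ℝ) := (Real.rpow_one v).symm
      _ ≤ v ^ b := Real.rpow_le_rpow_of_exponent_ge' hv hv₁ hb₀ hb₁
  · calc 1 - exp (-v) ≤ 1 := sub_le_self _ (Real.exp_nonneg _)
      _ ≤ v ^ b := Real.one_le_rpow hv₁ hb₀

lemma sq_mul_rpow (l : ℝ) {τ : ℝ} (hτ : 0 ≤ τ) (p : ℝ) :
    (l ^ 2 * τ) ^ p = |l| ^ (2 * p) * τ ^ p := by
  rw [Real.mul_rpow (sq_nonneg l) hτ, ← sq_abs, ← Real.rpow_natCast_mul (abs_nonneg l),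
    Nat.cast_ofNat]

lemma abs_mul_exp_neg_sq_mul_le {l τ q : ℝ} (hl : l ≠ 0) (hτ : 0 < τ) (hq₀ : 0 ≤ q)
    (hq₁ : q ≤ 1) : |l * exp (-l ^ 2 * τ)| ≤ τ ^ (-q) * |l| ^ (1 - 2 * q) :=
  calc |l * exp (-l ^ 2 * τ)| = |l| * exp (-(l ^ 2 * τ)) := by
        rw [abs_mul, Real.abs_exp, neg_mul]
    _ ≤ |l| * (l ^ 2 * τ) ^ (-q) := by
        gcongr
        exact exp_neg_le_rpow_neg (by positivity) hq₀ hq₁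
    _ = τ ^ (-q) * |l| ^ (1 - 2 * q) := by
        rw [sq_mul_rpow l hτ.le, sub_eq_add_neg, Real.rpow_add (abs_pos.mpr hl), Real.rpow_one]
        ring_nf

lemma abs_mul_exp_neg_sq_mul_add_sub_le {l τ δ q β : ℝ} (hl : l ≠ 0) (hτ : 0 < τ) (hδ : 0 ≤ δ)
    (hq₀ : 0 ≤ q) (hq₁ : q ≤ 1) (hβ₀ : 0 ≤ β) (hβ₁ : β ≤ 1) :
    |l * exp (-l ^ 2 * (τ + δ)) - l * exp (-l ^ 2 * τ)|
      ≤ δ ^ β * τ ^ (-q) * |l| ^ (1 - 2 * q + 2 * β) := by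
  have hle : exp (-(l ^ 2 * δ)) ≤ 1 := Real.exp_le_one_iff.mpr (neg_nonpos.mpr (by positivity))
  calc |l * exp (-l ^ 2 * (τ + δ)) - l * exp (-l ^ 2 * τ)|
      = |l * exp (-l ^ 2 * τ)| * (1 - exp (-(l ^ 2 * δ))) := by
        rw [← abs_of_nonneg (sub_nonneg.mpr hle), ← abs_mul, abs_sub_comm, mul_add, Real.exp_add,
          ← neg_mul]
        ring_nf
    _ ≤ (τ ^ (-q) * |l| ^ (1 - 2 * q)) * (l ^ 2 * δ) ^ β :=
        mul_le_mul (abs_mul_exp_neg_sq_mul_le hl hτ hq₀ hq₁)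
          (one_sub_exp_neg_le_rpow (by positivity) hβ₀ hβ₁) (sub_nonneg.mpr hle) (by positivity)
    _ = δ ^ β * τ ^ (-q) * |l| ^ (1 - 2 * q + 2 * β) := by
        rw [sq_mul_rpow l hδ, Real.rpow_add (abs_pos.mpr hl)]
        ring

end Semigroup

section KernelBounds

/-- The `n`-independent constant in the `L¹` bound for sine polynomials on the grid whose
coefficients decay like `|λ_{j,n}|^{-e}`; it is meaningful for `e > 1/4`, where the series
converges. -/
def decayConst (e : ℝ) : ℝ := √(π * ∑' j : ℕ, ((((j + 1 : ℕ) : ℝ) / 2) ^ (-(2 * e))) ^ 2)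

lemma summable_half_rpow_sq {e : ℝ} (he : 1 / 4 < e) :
    Summable fun j : ℕ ↦ ((((j + 1 : ℕ) : ℝ) / 2) ^ (-(2 * e))) ^ 2 := by
  have hshift : Summable fun j : ℕ ↦ ((j + 1 : ℕ) : ℝ) ^ (-(4 * e)) :=
    (summable_nat_add_iff 1).mpr (Real.summable_nat_rpow.mpr (by linarith))
  refine (hshift.div_const (2 ^ (-(4 * e)))).congr fun j ↦ ?_
  rw [← Real.div_rpow (by positivity) zero_le_two, ← Real.rpow_mul_natCast (by positivity)]
  congr 1
  push_cast
  ring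

lemma abs_lamEig_rpow_neg_le {n j : ℕ} (hj : j + 1 ≤ n) {e : ℝ} (he : 0 ≤ e) :
    |lamEig (j + 1) n| ^ (-e) ≤ (((j + 1 : ℕ) : ℝ) / 2) ^ (-(2 * e)) := by
  calc |lamEig (j + 1) n| ^ (-e) ≤ ((((j + 1 : ℕ) : ℝ) / 2) ^ 2) ^ (-e) :=
        Real.rpow_le_rpow_of_nonpos (by positivity) (sq_half_le_abs_lamEig hj)
          (neg_nonpos.mpr he)
    _ = (((j + 1 : ℕ) : ℝ) / 2) ^ (-(2 * e)) := by
        rw [← Real.rpow_natCast_mul (by positivity), Nat.cast_ofNat, mul_neg]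

lemma lamEig_ne_zero {n j : ℕ} (hj₀ : j ≠ 0) (hj : j ≤ n) : lamEig j n ≠ 0 :=
  abs_pos.mp (lt_of_lt_of_le (by positivity) (sq_half_le_abs_lamEig hj))

lemma integral_abs_sinePoly_kap_le_of_decay {n : ℕ} (hn : n ≠ 0) {a : ℕ → ℝ} {e M : ℝ}
    (he : 1 / 4 < e) (hM : 0 ≤ M)
    (ha : ∀ j, j + 1 ≤ n → |a j| ≤ M * |lamEig (j + 1) n| ^ (-e)) :
    ∫ z in (0 : ℝ)..π, |sinePoly n a (kap n z)| ≤ decayConst e * M := by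
  set b : ℕ → ℝ := fun j ↦ (((j + 1 : ℕ) : ℝ) / 2) ^ (-(2 * e))
  have hcoeff {j : ℕ} (hj : j ∈ Finset.range (n - 1)) : a j ^ 2 ≤ M ^ 2 * b j ^ 2 := by
    have hjn : j + 1 ≤ n := by rw [Finset.mem_range] at hj; omega
    rw [← sq_abs, ← mul_pow]
    gcongr
    exact (ha j hjn).trans <|
      mul_le_mul_of_nonneg_left (abs_lamEig_rpow_neg_le hjn (by linarith)) hM
  have hsum : ∑ j ∈ Finset.range (n - 1), a j ^ 2 ≤ M ^ 2 * ∑' j, b j ^ 2 :=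
    calc ∑ j ∈ Finset.range (n - 1), a j ^ 2
        ≤ M ^ 2 * ∑ j ∈ Finset.range (n - 1), b j ^ 2 := by
          rw [Finset.mul_sum]
          exact Finset.sum_le_sum fun j hj ↦ hcoeff hj
      _ ≤ M ^ 2 * ∑' j, b j ^ 2 := by
          gcongr
          exact (summable_half_rpow_sq he).sum_le_tsum _ fun j _ ↦ sq_nonneg _
  calc ∫ z in (0 : ℝ)..π, |sinePoly n a (kap n z)|
      ≤ √(π * ∑ j ∈ Finset.range (n - 1), a j ^ 2) := integral_abs_sinePoly_kap_le hn a
    _ ≤ √(π * (M ^ 2 * ∑' j, b j ^ 2)) := by gcongr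
    _ = decayConst e * M := by
        rw [mul_left_comm, Real.sqrt_mul (sq_nonneg M), Real.sqrt_sq hM, mul_comm, decayConst]

/-- The coefficients of `Δ_nG^n_τ(x, ·)` as a sine polynomial in `κ_n(·)`, indexed from `0` as in
`sinePoly`. -/
def DGnCoeff (n : ℕ) (τ x : ℝ) (j : ℕ) : ℝ :=
  lamEig (j + 1) n * exp (-(lamEig (j + 1) n) ^ 2 * τ) * phiIn n (j + 1) x

lemma DGn_eq_sinePoly (n : ℕ) (τ x z : ℝ) :
    DGn n τ x z = sinePoly n (DGnCoeff n τ x) (kap n z) := rfl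

lemma DGn_sub_eq_sinePoly (n : ℕ) (τ σ x y z : ℝ) :
    DGn n τ x z - DGn n σ y z
      = sinePoly n (DGnCoeff n τ x - DGnCoeff n σ y) (kap n z) := by
  rw [sinePoly_sub, ← DGn_eq_sinePoly, ← DGn_eq_sinePoly]

variable {n : ℕ} {τ q : ℝ}

lemma integral_abs_DGn_le (hn : n ≠ 0) (hτ : 0 < τ) (hq : q ∈ Set.Ioc (5 / 8) 1) (x : ℝ) :
    ∫ z in (0 : ℝ)..π, |DGn n τ x z| ≤ decayConst (2 * q - 1) * τ ^ (-q) := by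
  obtain ⟨hq₀, hq₁⟩ := hq
  simp only [DGn_eq_sinePoly]
  refine integral_abs_sinePoly_kap_le_of_decay hn (by linarith) (by positivity) fun j hj ↦ ?_
  calc |DGnCoeff n τ x j|
      ≤ |lamEig (j + 1) n * exp (-(lamEig (j + 1) n) ^ 2 * τ)| := by
        rw [DGnCoeff, abs_mul]
        exact mul_le_of_le_one_right (abs_nonneg _) (abs_phiIn_le_one hn _ x)
    _ ≤ τ ^ (-q) * |lamEig (j + 1) n| ^ (1 - 2 * q) :=
        abs_mul_exp_neg_sq_mul_le (lamEig_ne_zero j.succ_ne_zero hj) hτ (by linarith) hq₁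
    _ = τ ^ (-q) * |lamEig (j + 1) n| ^ (-(2 * q - 1)) := by rw [neg_sub]

lemma integral_abs_DGn_sub_space_le (hn : n ≠ 0) (hτ : 0 < τ) (hq : q ∈ Set.Ioc (7 / 8) 1)
    (x y : ℝ) :
    ∫ z in (0 : ℝ)..π, |DGn n τ x z - DGn n τ y z|
      ≤ decayConst (2 * q - 3 / 2) * (2 * |x - y| * τ ^ (-q)) := by
  obtain ⟨hq₀, hq₁⟩ := hq
  simp only [DGn_sub_eq_sinePoly]
  refine integral_abs_sinePoly_kap_le_of_decay hn (by linarith) (by positivity) fun j hj ↦ ?_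
  have hlam : lamEig (j + 1) n ≠ 0 := lamEig_ne_zero j.succ_ne_zero hj
  have hinterp : |phiIn n (j + 1) x - phiIn n (j + 1) y|
      ≤ 2 * |lamEig (j + 1) n| ^ (1 / 2 : ℝ) * |x - y| :=
    (abs_phiIn_sub_le hn _ x y).trans <|
      mul_le_mul_of_nonneg_right (by linarith [half_le_abs_lamEig_rpow hj]) (abs_nonneg _)
  calc |(DGnCoeff n τ x - DGnCoeff n τ y) j|
      = |lamEig (j + 1) n * exp (-(lamEig (j + 1) n) ^ 2 * τ)|
          * |phiIn n (j + 1) x - phiIn n (j + 1) y| := by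
        rw [Pi.sub_apply, DGnCoeff, DGnCoeff, ← mul_sub, abs_mul]
    _ ≤ (τ ^ (-q) * |lamEig (j + 1) n| ^ (1 - 2 * q))
          * (2 * |lamEig (j + 1) n| ^ (1 / 2 : ℝ) * |x - y|) :=
        mul_le_mul (abs_mul_exp_neg_sq_mul_le hlam hτ (by linarith) hq₁) hinterp
          (abs_nonneg _) (by positivity)
    _ = 2 * |x - y| * τ ^ (-q) * |lamEig (j + 1) n| ^ (-(2 * q - 3 / 2)) := by
        rw [show -(2 * q - 3 / 2) = (1 - 2 * q) + 1 / 2 by ring,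
          Real.rpow_add (abs_pos.mpr hlam)]
        ring

lemma integral_abs_DGn_sub_time_le {β δ : ℝ} (hn : n ≠ 0) (hτ : 0 < τ) (hβ : 0 ≤ β)
    (hδ : 0 ≤ δ) (hq : q ∈ Set.Ioc (5 / 8 + β) 1) (x : ℝ) :
    ∫ z in (0 : ℝ)..π, |DGn n (τ + δ) x z - DGn n τ x z|
      ≤ decayConst (2 * q - 1 - 2 * β) * (δ ^ β * τ ^ (-q)) := by
  obtain ⟨hq₀, hq₁⟩ := hq
  simp only [DGn_sub_eq_sinePoly]
  refine integral_abs_sinePoly_kap_le_of_decay hn (by linarith) (by positivity) fun j hj ↦ ?_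
  calc |(DGnCoeff n (τ + δ) x - DGnCoeff n τ x) j|
      ≤ |lamEig (j + 1) n * exp (-(lamEig (j + 1) n) ^ 2 * (τ + δ))
          - lamEig (j + 1) n * exp (-(lamEig (j + 1) n) ^ 2 * τ)| := by
        rw [Pi.sub_apply, DGnCoeff, DGnCoeff, ← sub_mul, abs_mul]
        exact mul_le_of_le_one_right (abs_nonneg _) (abs_phiIn_le_one hn _ x)
    _ ≤ δ ^ β * τ ^ (-q) * |lamEig (j + 1) n| ^ (1 - 2 * q + 2 * β) :=
        abs_mul_exp_neg_sq_mul_add_sub_le (lamEig_ne_zero j.succ_ne_zero hj) hτ hδ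
          (by linarith) hq₁ hβ (by linarith)
    _ = δ ^ β * τ ^ (-q) * |lamEig (j + 1) n| ^ (-(2 * q - 1 - 2 * β)) := by ring_nf

lemma intervalIntegrable_abs_DGn_sub (hn : n ≠ 0) (τ σ x y : ℝ) :
    IntervalIntegrable (fun z ↦ |DGn n τ x z - DGn n σ y z|) MeasureTheory.volume 0 π := by
  simp only [DGn_sub_eq_sinePoly]
  exact intervalIntegrable_comp_kap hn fun w ↦ |sinePoly n _ w|

lemma integral_abs_DGn_sub_triangle (hn : n ≠ 0) (τ σ ρ x y w : ℝ) :
    ∫ z in (0 : ℝ)..π, |DGn n τ x z - DGn n σ y z|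
      ≤ (∫ z in (0 : ℝ)..π, |DGn n τ x z - DGn n ρ w z|)
        + ∫ z in (0 : ℝ)..π, |DGn n ρ w z - DGn n σ y z| := by
  rw [← integral_add (intervalIntegrable_abs_DGn_sub hn _ _ _ _)
    (intervalIntegrable_abs_DGn_sub hn _ _ _ _)]
  exact integral_mono_on Real.pi_nonneg (intervalIntegrable_abs_DGn_sub hn _ _ _ _)
    ((intervalIntegrable_abs_DGn_sub hn _ _ _ _).add (intervalIntegrable_abs_DGn_sub hn _ _ _ _))
    fun z _ ↦ abs_sub_le _ _ _

lemma integral_abs_DGn_sub_le {β δ : ℝ} (hn : n ≠ 0) (hτ : 0 < τ) (hβ : 0 ≤ β) (hδ : 0 ≤ δ)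
    (hq : q ∈ Set.Ioc (max (7 / 8) (5 / 8 + β)) 1) (x y : ℝ) :
    ∫ z in (0 : ℝ)..π, |DGn n (τ + δ) x z - DGn n τ y z|
      ≤ (2 * decayConst (2 * q - 3 / 2) + decayConst (2 * q - 1 - 2 * β))
          * (|x - y| + δ ^ β) * τ ^ (-q) := by
  obtain ⟨hq₀, hq₁⟩ := hq
  rw [max_lt_iff] at hq₀
  have hA : 0 ≤ decayConst (2 * q - 3 / 2) := Real.sqrt_nonneg _
  have hB : 0 ≤ decayConst (2 * q - 1 - 2 * β) := Real.sqrt_nonneg _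
  calc ∫ z in (0 : ℝ)..π, |DGn n (τ + δ) x z - DGn n τ y z|
      ≤ decayConst (2 * q - 1 - 2 * β) * (δ ^ β * τ ^ (-q))
          + decayConst (2 * q - 3 / 2) * (2 * |x - y| * τ ^ (-q)) :=
        (integral_abs_DGn_sub_triangle hn _ _ τ _ _ x).trans <|
          add_le_add (integral_abs_DGn_sub_time_le hn hτ hβ hδ ⟨hq₀.2, hq₁⟩ x)
            (integral_abs_DGn_sub_space_le hn hτ ⟨hq₀.1, hq₁⟩ x y)
    _ = (2 * decayConst (2 * q - 3 / 2) * |x - y| + decayConst (2 * q - 1 - 2 * β) * δ ^ β)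
          * τ ^ (-q) := by ring
    _ ≤ _ := by
        gcongr
        have h₁ : 0 ≤ decayConst (2 * q - 3 / 2) * δ ^ β := by positivity
        have h₂ : 0 ≤ decayConst (2 * q - 1 - 2 * β) * |x - y| := by positivity
        linarith

end KernelBounds

section TimeIntegration

lemma integral_sub_rpow_neg {q : ℝ} (hq : q < 1) (a b : ℝ) :
    ∫ r in a..b, (b - r) ^ (-q) = (b - a) ^ (1 - q) / (1 - q) := by
  rw [integral_comp_sub_left fun r ↦ r ^ (-q), sub_self, integral_rpow (Or.inl (by linarith)),
    neg_add_eq_sub, Real.zero_rpow (by linarith), sub_zero]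

lemma integral_le_of_le_sub_rpow_neg {f : ℝ → ℝ} {a b q A : ℝ} (hab : a ≤ b) (hq : q < 1)
    (hf₀ : ∀ r ∈ Set.Ioo a b, 0 ≤ f r) (hf : ∀ r ∈ Set.Ioo a b, f r ≤ A * (b - r) ^ (-q)) :
    ∫ r in a..b, f r ≤ A * ((b - a) ^ (1 - q) / (1 - q)) := by
  have hint : IntervalIntegrable (fun r ↦ (b - r) ^ (-q)) MeasureTheory.volume a b := by
    simpa only [sub_sub_cancel] using
      ((intervalIntegrable_rpow' (a := b - a) (b := b - b) (r := -q)
        (by linarith)).comp_sub_left b)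
  rw [← integral_sub_rpow_neg hq, ← integral_const_mul, integral_of_le hab, integral_of_le hab,
    MeasureTheory.integral_Ioc_eq_integral_Ioo, MeasureTheory.integral_Ioc_eq_integral_Ioo]
  refine MeasureTheory.integral_mono_of_nonneg
    (MeasureTheory.ae_restrict_of_forall_mem measurableSet_Ioo hf₀) ?_
    (MeasureTheory.ae_restrict_of_forall_mem measurableSet_Ioo hf)
  exact ((hint.const_mul A).1).mono_set Set.Ioo_subset_Ioc_self

variable {n : ℕ} {β s t : ℝ}

lemma integral_integral_abs_DGn_le (hn : n ≠ 0) (hβ : β ∈ Set.Ioo 0 (3 / 8)) (hst : s ≤ t)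
    (x : ℝ) :
    ∫ r in s..t, ∫ z in (0 : ℝ)..π, |DGn n (t - r) x z|
      ≤ decayConst (1 - 2 * β) / β * (t - s) ^ β := by
  have hq : 1 - β ∈ Set.Ioc (5 / 8) 1 := ⟨by linarith [hβ.2], by linarith [hβ.1]⟩
  calc ∫ r in s..t, ∫ z in (0 : ℝ)..π, |DGn n (t - r) x z|
      ≤ decayConst (2 * (1 - β) - 1) * ((t - s) ^ (1 - (1 - β)) / (1 - (1 - β))) :=
        integral_le_of_le_sub_rpow_neg hst (by linarith [hβ.1])
          (fun r _ ↦ integral_nonneg Real.pi_nonneg fun z _ ↦ abs_nonneg _)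
          (fun r hr ↦ integral_abs_DGn_le hn (sub_pos.mpr hr.2) hq x)
    _ = decayConst (1 - 2 * β) / β * (t - s) ^ β := by
        rw [sub_sub_cancel, show 2 * (1 - β) - 1 = 1 - 2 * β by ring]
        ring

lemma integral_integral_abs_DGn_sub_le {q : ℝ} (hn : n ≠ 0) (hβ : 0 ≤ β) (hs : 0 ≤ s)
    (hst : s ≤ t) (hq : q ∈ Set.Ioo (max (7 / 8) (5 / 8 + β)) 1) (x y : ℝ) :
    ∫ r in (0 : ℝ)..s, ∫ z in (0 : ℝ)..π, |DGn n (t - r) x z - DGn n (s - r) y z|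
      ≤ (2 * decayConst (2 * q - 3 / 2) + decayConst (2 * q - 1 - 2 * β))
          * (|x - y| + (t - s) ^ β) * (s ^ (1 - q) / (1 - q)) := by
  have hinner (r : ℝ) (hr : r ∈ Set.Ioo 0 s) :=
    integral_abs_DGn_sub_le hn (sub_pos.mpr hr.2) hβ (sub_nonneg.mpr hst) ⟨hq.1, hq.2.le⟩ x y
  simpa only [sub_add_sub_cancel', sub_zero] using
    integral_le_of_le_sub_rpow_neg hs hq.2
      (fun r _ ↦ integral_nonneg Real.pi_nonneg fun z _ ↦ abs_nonneg _) hinner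

end TimeIntegration

theorem stmt15_general {β T : ℝ} (hβ : β ∈ Set.Ioo (0 : ℝ) (3 / 8)) (hT : 0 < T) :
    ∃ C : ℝ, 0 < C ∧ ∀ n : ℕ, n ≠ 0 → ∀ x y s t : ℝ, 0 ≤ s → s < t → t ≤ T →
      ((∫ r in (0:ℝ)..s, ∫ z in (0:ℝ)..π, |DGn n (t - r) x z - DGn n (s - r) y z|)
          ≤ C * (|x - y| + (t - s) ^ β))
      ∧ ((∫ r in s..t, ∫ z in (0:ℝ)..π, |DGn n (t - r) x z|) ≤ C * (t - s) ^ β) := by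
  obtain ⟨q, hq⟩ : (Set.Ioo (max (7 / 8) (5 / 8 + β)) 1).Nonempty :=
    Set.nonempty_Ioo.mpr (max_lt (by norm_num) (by linarith [hβ.2]))
  have hβ₀ : 0 < β := hβ.1
  have hq₁ : 0 < 1 - q := sub_pos.mpr hq.2
  set D := 2 * decayConst (2 * q - 3 / 2) + decayConst (2 * q - 1 - 2 * β)
  set A := D * (T ^ (1 - q) / (1 - q))
  set B := decayConst (1 - 2 * β) / β
  have hdecay (e : ℝ) : 0 ≤ decayConst e := Real.sqrt_nonneg _
  have hD : 0 ≤ D := add_nonneg (mul_nonneg zero_le_two (hdecay _)) (hdecay _)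
  have hA : 0 ≤ A := by positivity
  have hB : 0 ≤ B := div_nonneg (hdecay _) hβ₀.le
  refine ⟨A + B + 1, by positivity, fun n hn x y s t hs hst htT ↦ ⟨?_, ?_⟩⟩
  · have hdist : 0 ≤ |x - y| + (t - s) ^ β :=
      add_nonneg (abs_nonneg _) (Real.rpow_nonneg (sub_pos.mpr hst).le _)
    calc ∫ r in (0 : ℝ)..s, ∫ z in (0 : ℝ)..π, |DGn n (t - r) x z - DGn n (s - r) y z|
        ≤ D * (|x - y| + (t - s) ^ β) * (s ^ (1 - q) / (1 - q)) :=
          integral_integral_abs_DGn_sub_le hn hβ₀.le hs hst.le hq x y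
      _ ≤ D * (|x - y| + (t - s) ^ β) * (T ^ (1 - q) / (1 - q)) := by
          gcongr
          exact hst.le.trans htT
      _ = A * (|x - y| + (t - s) ^ β) := by ring
      _ ≤ (A + B + 1) * (|x - y| + (t - s) ^ β) :=
          mul_le_mul_of_nonneg_right (by linarith) hdist
  · calc ∫ r in s..t, ∫ z in (0 : ℝ)..π, |DGn n (t - r) x z|
        ≤ B * (t - s) ^ β := integral_integral_abs_DGn_le hn hβ hst.le x
      _ ≤ (A + B + 1) * (t - s) ^ β :=
          mul_le_mul_of_nonneg_right (by linarith) (Real.rpow_nonneg (sub_pos.mpr hst).le _)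

/-- For every `α ∈ (0,1)` and `T > 0` there is `C = C(α,T) > 0`, independent of `n`, such
that for all `n ≥ 2`, `x, y ∈ (0,π)`, `0 ≤ s < t ≤ T`:
`∫₀ˢ∫₀^π |Δ_nG^n_{t-r}(x,z) - Δ_nG^n_{s-r}(y,z)| dz dr ≤ C(|x-y| + (t-s)^{3α/8})` and
`∫ₛᵗ∫₀^π |Δ_nG^n_{t-r}(x,z)| dz dr ≤ C(t-s)^{3α/8}`. -/
theorem stmt15 (α T : ℝ) (hα : α ∈ Set.Ioo (0 : ℝ) 1) (hT : 0 < T) :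
    ∃ C : ℝ, 0 < C ∧ ∀ n : ℕ, 2 ≤ n →
      ∀ x ∈ Set.Ioo 0 Real.pi, ∀ y ∈ Set.Ioo 0 Real.pi, ∀ s t : ℝ, 0 ≤ s → s < t → t ≤ T →
        ((∫ r in (0:ℝ)..s, ∫ z in (0:ℝ)..Real.pi, |DGn n (t - r) x z - DGn n (s - r) y z|)
            ≤ C * (|x - y| + (t - s) ^ (3 * α / 8)))
        ∧ ((∫ r in s..t, ∫ z in (0:ℝ)..Real.pi, |DGn n (t - r) x z|)
            ≤ C * (t - s) ^ (3 * α / 8)) := by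
  obtain ⟨C, hC, hbound⟩ := stmt15_general (β := 3 * α / 8)
    ⟨by linarith [hα.1], by linarith [hα.2]⟩ hT
  exact ⟨C, hC, fun n hn x _ y _ ↦ hbound n (by omega) x y⟩
end
end
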